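/- Let ξ > 0. For every x ∈ ℝ³ with x ≠ 0, the (free-space) Fourier-space Ewald integral has the closed form (1/(2π²)) ∫_{ℝ³} (e^{−‖k‖²/(4ξ²)}/‖k‖²) e^{i⟨k,x⟩} dk = erf(ξ‖x‖)/‖x‖. -/

import Mathlib

/-!
With `a = 1 / (4 ξ²)`, the singular factor is resolved into Gaussians,
`exp (-a ‖k‖²) / ‖k‖² = ∫ s in (a, ∞), exp (-s ‖k‖²)` (`integral_exp_neg_mul_Ioi_sq`).
By Fubini (`integrable_gauss_phase`) the integral over `k` may be taken first, and
the Fourier transform of a Gaussian (`integral_gauss_phase`) leaves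
`∫ s in (a, ∞), (π / s) ^ (3 / 2) * exp (-‖x‖² / (4 s))`. The substitution `t = ‖x‖ / (2 √s)`
(`integral_Ioi_heat`) sends `s = a` to `t = ξ ‖x‖` and `s = ∞` to `t = 0`, which gives the error
function.
-/

open MeasureTheory Real
open scoped RealInnerProductSpace

/-- The error function `erf(x) = (2/√π) ∫_0^x e^{-t²} dt`. -/
noncomputable def erf (x : ℝ) : ℝ :=
  (2 / Real.sqrt π) * ∫ t in (0 : ℝ)..x, Real.exp (-t ^ 2)

/-- The factor `1 / q` as a superposition of exponentials. The case `q = 0` holds through junk values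
on both sides, so that the identity can be used under the integral at every `k`, including `k = 0`. -/
lemma integral_exp_neg_mul_Ioi_sq (a q : ℝ) (hq : 0 ≤ q) :
    ∫ s in Set.Ioi a, Real.exp (-s * q) = Real.exp (-a * q) / q := by
  rcases hq.eq_or_lt with rfl | hq
  · -- Both sides are junk values: `1` is not integrable on `(a, ∞)`, and division by zero gives zero.
    simp [Measure.real]
  · have := integral_exp_mul_Ioi (a := -q) (by linarith) a
    rw [neg_div_neg_eq] at this
    rw [show -a * q = -q * a by ring, ← this]
    exact integral_congr_ae (.of_forall fun s => by simp only; ring_nf)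

/-- The Fourier transform of a Gaussian on `ℝ³`. -/
lemma integral_gauss_phase {s : ℝ} (hs : 0 < s) (x : EuclideanSpace ℝ (Fin 3)) :
    ∫ k : EuclideanSpace ℝ (Fin 3),
      ((Real.exp (-s * ‖k‖ ^ 2) : ℝ) : ℂ) * Complex.exp (Complex.I * (⟪k, x⟫ : ℝ)) =
    (((π / s) ^ (3 / 2 : ℝ) * Real.exp (-‖x‖ ^ 2 / (4 * s)) : ℝ) : ℂ) := by
  have := GaussianFourier.integral_cexp_neg_mul_sq_norm_add (b := (s : ℂ)) (by simpa) Complex.I x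
  rw [Complex.ofReal_mul, Complex.ofReal_cpow (by positivity)]
  convert! this using 1
  · refine integral_congr_ae (.of_forall fun k => ?_)
    simp only
    rw [Complex.ofReal_exp, ← Complex.exp_add, real_inner_comm]
    push_cast; ring_nf
  · simp

/-- The integrability behind Fubini: the phase has modulus one, and integrating the Gaussian over `k`
leaves `(π / s) ^ (3 / 2)`, which is integrable at infinity. -/
lemma integrable_gauss_phase {a : ℝ} (ha : 0 < a) (x : EuclideanSpace ℝ (Fin 3)) :
    Integrable (fun p : EuclideanSpace ℝ (Fin 3) × ℝ =>
      ((Real.exp (-p.2 * ‖p.1‖ ^ 2) : ℝ) : ℂ) * Complex.exp (Complex.I * (⟪p.1, x⟫ : ℝ)))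
      (volume.prod (volume.restrict (Set.Ioi a))) := by
  have hn : ∀ (s : ℝ) (k : EuclideanSpace ℝ (Fin 3)),
      ‖((Real.exp (-s * ‖k‖ ^ 2) : ℝ) : ℂ) * Complex.exp (Complex.I * (⟪k, x⟫ : ℝ))‖
        = Real.exp (-s * ‖k‖ ^ 2) := by
    intro s k
    rw [norm_mul, mul_comm Complex.I, Complex.norm_exp_ofReal_mul_I, mul_one,
      Complex.norm_real, Real.norm_of_nonneg (Real.exp_pos _).le]
  have hmeas : Continuous (fun p : EuclideanSpace ℝ (Fin 3) × ℝ =>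
      ((Real.exp (-p.2 * ‖p.1‖ ^ 2) : ℝ) : ℂ) * Complex.exp (Complex.I * (⟪p.1, x⟫ : ℝ))) := by
    fun_prop
  rw [integrable_prod_iff' hmeas.aestronglyMeasurable]
  constructor
  · -- A non-integrable function would have integral zero, but the Gaussian transform is positive.
    filter_upwards [ae_restrict_mem measurableSet_Ioi] with s hs
    have hs : 0 < s := ha.trans hs
    by_contra h
    have h0 := integral_undef h
    rw [integral_gauss_phase hs] at h0
    have : 0 < (π / s) ^ (3 / 2 : ℝ) * Real.exp (-‖x‖ ^ 2 / (4 * s)) := by positivity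
    exact this.ne' (by exact_mod_cast h0)
  · have : IntegrableOn (fun s : ℝ => π ^ (3 / 2 : ℝ) * s ^ (-(3 / 2) : ℝ)) (Set.Ioi a) :=
      (integrableOn_Ioi_rpow_of_lt (by norm_num) ha).const_mul _
    refine this.congr_fun (fun s hs => ?_) measurableSet_Ioi
    have hs : 0 < s := ha.trans hs
    simp only [hn]
    have h := integral_gauss_phase hs 0
    simp only [inner_zero_right, Complex.ofReal_zero, mul_zero, Complex.exp_zero, mul_one] at h
    rw [integral_complex_ofReal] at h
    have h := Complex.ofReal_injective h
    rw [h, Real.div_rpow pi_pos.le hs.le, Real.rpow_neg hs.le]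
    simp [div_eq_mul_inv]

/-- The substitution `t = r / (2 √s)` turns the remaining integral over `s` into a Gaussian integral
over a bounded interval. -/
lemma integral_Ioi_heat {a r : ℝ} (ha : 0 < a) (hr : 0 < r) :
    ∫ s in Set.Ioi a, (π / s) ^ (3 / 2 : ℝ) * Real.exp (-r ^ 2 / (4 * s)) =
      π ^ (3 / 2 : ℝ) * (4 / r) * ∫ t in (0 : ℝ)..r / 2 * a ^ (-(1 / 2) : ℝ), Real.exp (-t ^ 2) := by
  set E : ℝ → ℝ := fun y => ∫ t in (0 : ℝ)..y, Real.exp (-t ^ 2) with hE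
  have hEd : ∀ y, HasDerivAt E (Real.exp (-y ^ 2)) y := fun y =>
    intervalIntegral.integral_hasDerivAt_right
      (Continuous.intervalIntegrable (by fun_prop) _ _)
      (Continuous.stronglyMeasurableAtFilter (by fun_prop) _ _) (by fun_prop)
  -- The antiderivative is the incomplete Gaussian integral in the new variable `t = r / (2 √s)`.
  have hd : ∀ s ∈ Set.Ici a, HasDerivAt
      (fun s : ℝ => -(π ^ (3 / 2 : ℝ) * (4 / r)) * E (r / 2 * s ^ (-(1 / 2) : ℝ)))
      ((π / s) ^ (3 / 2 : ℝ) * Real.exp (-r ^ 2 / (4 * s))) s := by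
    intro s hs
    have hs : 0 < s := ha.trans_le hs
    have h1 : HasDerivAt (fun s : ℝ => r / 2 * s ^ (-(1 / 2) : ℝ))
        (r / 2 * (-(1 / 2) * s ^ (-(1 / 2) - 1 : ℝ))) s :=
      (Real.hasDerivAt_rpow_const (Or.inl hs.ne')).const_mul _
    convert! ((hEd _).comp s h1).const_mul (-(π ^ (3 / 2 : ℝ) * (4 / r))) using 1
    have e1 : (s ^ (-(1 / 2) : ℝ)) ^ 2 = s⁻¹ := by
      rw [← Real.rpow_natCast, ← Real.rpow_mul hs.le, ← Real.rpow_neg_one]; norm_num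
    rw [mul_pow, e1, Real.div_rpow pi_pos.le hs.le, show (-(1 / 2) - 1 : ℝ) = -(3 / 2) by norm_num,
      Real.rpow_neg hs.le, show -((r / 2) ^ 2 * s⁻¹) = -r ^ 2 / (4 * s) by field_simp; ring]
    field_simp
    norm_num
  have hlim : Filter.Tendsto
      (fun s : ℝ => -(π ^ (3 / 2 : ℝ) * (4 / r)) * E (r / 2 * s ^ (-(1 / 2) : ℝ)))
      Filter.atTop (nhds 0) := by
    have h1 : Filter.Tendsto (fun s : ℝ => r / 2 * s ^ (-(1 / 2) : ℝ)) Filter.atTop (nhds 0) := by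
      simpa using (tendsto_rpow_neg_atTop (y := 1 / 2) (by norm_num)).const_mul (r / 2)
    have h2 := ((hEd 0).continuousAt.tendsto.comp h1).const_mul (-(π ^ (3 / 2 : ℝ) * (4 / r)))
    simpa [hE] using h2
  rw [integral_Ioi_of_hasDerivAt_of_nonneg' hd _ hlim]
  · ring
  · intro s hs
    have : 0 < s := ha.trans hs
    positivity

/-- For `x ≠ 0`, the free-space Fourier-space Ewald integral has the closed form
`(1/(2π²)) ∫_{ℝ³} (e^{-‖k‖²/(4ξ²)}/‖k‖²) e^{i⟨k,x⟩} dk = erf(ξ‖x‖)/‖x‖`. -/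
theorem fourier_space_ewald_free_space (ξ : ℝ) (hξ : 0 < ξ)
    (x : EuclideanSpace ℝ (Fin 3)) (hx : x ≠ 0) :
    (1 / (2 * π ^ 2) : ℂ) *
        ∫ k : EuclideanSpace ℝ (Fin 3),
          ((Real.exp (-‖k‖ ^ 2 / (4 * ξ ^ 2)) / ‖k‖ ^ 2 : ℝ) : ℂ) *
            Complex.exp (Complex.I * (⟪k, x⟫ : ℝ)) =
      ((erf (ξ * ‖x‖) / ‖x‖ : ℝ) : ℂ) := by
  have hr : 0 < ‖x‖ := norm_pos_iff.mpr hx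
  set a : ℝ := 1 / (4 * ξ ^ 2) with ha_def
  have ha : 0 < a := by positivity
  have hk : ∀ k : EuclideanSpace ℝ (Fin 3),
      ((Real.exp (-‖k‖ ^ 2 / (4 * ξ ^ 2)) / ‖k‖ ^ 2 : ℝ) : ℂ) *
          Complex.exp (Complex.I * (⟪k, x⟫ : ℝ)) =
        ∫ s in Set.Ioi a, ((Real.exp (-s * ‖k‖ ^ 2) : ℝ) : ℂ) *
          Complex.exp (Complex.I * (⟪k, x⟫ : ℝ)) := by
    intro k
    rw [integral_mul_const, integral_complex_ofReal, integral_exp_neg_mul_Ioi_sq _ _ (sq_nonneg _),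
      show -‖k‖ ^ 2 / (4 * ξ ^ 2) = -a * ‖k‖ ^ 2 by rw [ha_def]; ring]
  have ha2 : ‖x‖ / 2 * a ^ (-(1 / 2) : ℝ) = ξ * ‖x‖ := by
    rw [ha_def, show (1 / (4 * ξ ^ 2) : ℝ) = ((2 * ξ) ^ 2)⁻¹ by rw [one_div]; ring_nf,
      Real.rpow_neg (by positivity), ← Real.sqrt_eq_rpow, Real.sqrt_inv,
      Real.sqrt_sq (by positivity)]
    field_simp
  have hpi : π ^ (3 / 2 : ℝ) = π * √π := by
    rw [show (3 / 2 : ℝ) = 1 + 1 / 2 by norm_num, Real.rpow_add pi_pos, Real.rpow_one,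
      Real.sqrt_eq_rpow]
  simp_rw [hk]
  rw [integral_integral_swap (integrable_gauss_phase ha x),
    setIntegral_congr_fun measurableSet_Ioi
      (fun s hs => integral_gauss_phase (ha.trans hs) x), integral_complex_ofReal,
    integral_Ioi_heat ha hr, ha2, hpi, erf]
  norm_cast
  have hsq : √π ^ 2 = π := Real.sq_sqrt pi_pos.le
  have hs0 : √π ≠ 0 := (Real.sqrt_pos.mpr pi_pos).ne'
  field_simp
  rw [hsq]
  ring
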